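/- Let Ω ⊆ ℝ² be open, ε > 0, h_ex ∈ ℝ, and let f, h₀ : Ω → ℝ be smooth with Δf = f and Δh₀ = h₀ on Ω; set Z := ∇f − h_ex ∇^⊥ h₀. Suppose v : Ω × ℝ → ℂ and B : Ω × ℝ → ℝ² are smooth and satisfy, pointwise on Ω × ℝ with h' := curl B: ∂_t v + ifv = Δ_B v + (v/ε²)(1−|v|²) + 2i ∇_B v · Z + ivf − v|Z|², and ∂_t B + ∇f = ∇^⊥ h' + (iv, ∇_B v) + |v|²∇f − (|v|²−1) h_ex ∇^⊥ h₀. Then the Ginzburg-Landau energy density satisfies, pointwise on Ω × ℝ: ∂_t g⁰_ε(v,B) = div(∂_t v, ∇_B v) + curl(h' ∂_t B) − |∂_t v|² − |∂_t B|² + (|v|²−1) Z · ∂_t B + 2(∂_t v, i∇_B v) · Z − (v, ∂_t v)|Z|². -/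

import Mathlib

noncomputable section

open Complex

/-- Real inner product of two complex numbers: `(a,b) = Re a · Re b + Im a · Im b`. -/
def rip (a b : ℂ) : ℝ := a.re * b.re + a.im * b.im

/-- `(a, X)` for `a : ℂ` and `X : ℂ²`: the vector in `ℝ²` with components `(a,X₁)`, `(a,X₂)`. -/
def ripv (a : ℂ) (X : ℂ × ℂ) : ℝ × ℝ := (rip a X.1, rip a X.2)

/-- Dot product of `X : ℂ²` with `Z : ℝ²`: `X·Z = X₁Z₁ + X₂Z₂ ∈ ℂ`. -/
def cdotR (X : ℂ × ℂ) (Z : ℝ × ℝ) : ℂ := X.1 * (Z.1 : ℂ) + X.2 * (Z.2 : ℂ)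

/-- Euclidean dot product on `ℝ²`. -/
def rdot (a b : ℝ × ℝ) : ℝ := a.1 * b.1 + a.2 * b.2

/-- Perpendicular of a vector: `Z^⊥ = (−Z₂, Z₁)`. -/
def perp (a : ℝ × ℝ) : ℝ × ℝ := (-a.2, a.1)

/-! ### Spatial differential operators for functions on `ℝ²` -/

/-- First spatial partial derivative `∂₁`. -/
def pd1 {E : Type*} [NormedAddCommGroup E] [NormedSpace ℝ E]
    (f : ℝ × ℝ → E) (x : ℝ × ℝ) : E := fderiv ℝ f x (1, 0)

/-- Second spatial partial derivative `∂₂`. -/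
def pd2 {E : Type*} [NormedAddCommGroup E] [NormedSpace ℝ E]
    (f : ℝ × ℝ → E) (x : ℝ × ℝ) : E := fderiv ℝ f x (0, 1)

/-- Gradient `∇g = (∂₁g, ∂₂g)`. -/
def sgrad (g : ℝ × ℝ → ℝ) (x : ℝ × ℝ) : ℝ × ℝ := (pd1 g x, pd2 g x)

/-- Perpendicular gradient `∇^⊥ g = (−∂₂g, ∂₁g)`. -/
def sgradPerp (g : ℝ × ℝ → ℝ) (x : ℝ × ℝ) : ℝ × ℝ := (-(pd2 g x), pd1 g x)

/-- Laplacian `Δg = ∂₁∂₁g + ∂₂∂₂g`. -/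
def slap (g : ℝ × ℝ → ℝ) (x : ℝ × ℝ) : ℝ := pd1 (pd1 g) x + pd2 (pd2 g) x

/-- Curl of a vector field: `curl X = ∂₁X₂ − ∂₂X₁`. -/
def scurl (X : ℝ × ℝ → ℝ × ℝ) (x : ℝ × ℝ) : ℝ := (pd1 X x).2 - (pd2 X x).1

/-- Divergence of a vector field: `div X = ∂₁X₁ + ∂₂X₂`. -/
def sdiv (X : ℝ × ℝ → ℝ × ℝ) (x : ℝ × ℝ) : ℝ := (pd1 X x).1 + (pd2 X x).2

/-- Covariant partial derivative `∂₁^A u = ∂₁u − iA₁u`. -/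
def cpd1 (A : ℝ × ℝ → ℝ × ℝ) (u : ℝ × ℝ → ℂ) (x : ℝ × ℝ) : ℂ :=
  pd1 u x - Complex.I * ((A x).1 : ℂ) * u x

/-- Covariant partial derivative `∂₂^A u = ∂₂u − iA₂u`. -/
def cpd2 (A : ℝ × ℝ → ℝ × ℝ) (u : ℝ × ℝ → ℂ) (x : ℝ × ℝ) : ℂ :=
  pd2 u x - Complex.I * ((A x).2 : ℂ) * u x

/-- Covariant gradient `∇_A u = ∇u − iAu`. -/
def covGrad (A : ℝ × ℝ → ℝ × ℝ) (u : ℝ × ℝ → ℂ) (x : ℝ × ℝ) : ℂ × ℂ :=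
  (cpd1 A u x, cpd2 A u x)

/-- Covariant Laplacian `Δ_A u = ∂₁^A ∂₁^A u + ∂₂^A ∂₂^A u`. -/
def covLap (A : ℝ × ℝ → ℝ × ℝ) (u : ℝ × ℝ → ℂ) (x : ℝ × ℝ) : ℂ :=
  cpd1 A (cpd1 A u) x + cpd2 A (cpd2 A u) x

/-- Vorticity `μ(u,A) = curl((iu, ∇_A u) + A)`. -/
def svort (u : ℝ × ℝ → ℂ) (A : ℝ × ℝ → ℝ × ℝ) (x : ℝ × ℝ) : ℝ :=
  scurl (fun y => ripv (Complex.I * u y) (covGrad A u y) + A y) x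

/-- Ginzburg–Landau energy density
`g⁰_ε(u,A) = ½(|∇_A u|² + (1−|u|²)²/(2ε²) + (curl A)²)`. -/
def glEnergy (ε : ℝ) (u : ℝ × ℝ → ℂ) (A : ℝ × ℝ → ℝ × ℝ) (x : ℝ × ℝ) : ℝ :=
  (1 / 2) * (Complex.normSq (cpd1 A u x) + Complex.normSq (cpd2 A u x)
    + (1 - Complex.normSq (u x)) ^ 2 / (2 * ε ^ 2) + (scurl A x) ^ 2)

/-! ### Space-time differential operators for functions on `ℝ² × ℝ`
(spatial operators act in the spatial variables, `tdt` is the time derivative) -/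

/-- First spatial partial derivative `∂₁`. -/
def sp1 {E : Type*} [NormedAddCommGroup E] [NormedSpace ℝ E]
    (f : (ℝ × ℝ) × ℝ → E) (z : (ℝ × ℝ) × ℝ) : E := fderiv ℝ f z ((1, 0), 0)

/-- Second spatial partial derivative `∂₂`. -/
def sp2 {E : Type*} [NormedAddCommGroup E] [NormedSpace ℝ E]
    (f : (ℝ × ℝ) × ℝ → E) (z : (ℝ × ℝ) × ℝ) : E := fderiv ℝ f z ((0, 1), 0)

/-- Time derivative `∂_t`. -/
def tdt {E : Type*} [NormedAddCommGroup E] [NormedSpace ℝ E]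
    (f : (ℝ × ℝ) × ℝ → E) (z : (ℝ × ℝ) × ℝ) : E := fderiv ℝ f z ((0, 0), 1)

/-- Spatial gradient. -/
def tgrad (g : (ℝ × ℝ) × ℝ → ℝ) (z : (ℝ × ℝ) × ℝ) : ℝ × ℝ := (sp1 g z, sp2 g z)

/-- Spatial perpendicular gradient `∇^⊥ g = (−∂₂g, ∂₁g)`. -/
def tgradPerp (g : (ℝ × ℝ) × ℝ → ℝ) (z : (ℝ × ℝ) × ℝ) : ℝ × ℝ := (-(sp2 g z), sp1 g z)

/-- Spatial Laplacian. -/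
def tlap (g : (ℝ × ℝ) × ℝ → ℝ) (z : (ℝ × ℝ) × ℝ) : ℝ := sp1 (sp1 g) z + sp2 (sp2 g) z

/-- Spatial curl of a time-dependent vector field. -/
def tcurl (X : (ℝ × ℝ) × ℝ → ℝ × ℝ) (z : (ℝ × ℝ) × ℝ) : ℝ := (sp1 X z).2 - (sp2 X z).1

/-- Spatial divergence of a time-dependent vector field. -/
def tdiv (X : (ℝ × ℝ) × ℝ → ℝ × ℝ) (z : (ℝ × ℝ) × ℝ) : ℝ := (sp1 X z).1 + (sp2 X z).2

/-- Covariant partial derivative `∂₁^B w = ∂₁w − iB₁w`. -/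
def tcpd1 (B : (ℝ × ℝ) × ℝ → ℝ × ℝ) (w : (ℝ × ℝ) × ℝ → ℂ) (z : (ℝ × ℝ) × ℝ) : ℂ :=
  sp1 w z - Complex.I * ((B z).1 : ℂ) * w z

/-- Covariant partial derivative `∂₂^B w = ∂₂w − iB₂w`. -/
def tcpd2 (B : (ℝ × ℝ) × ℝ → ℝ × ℝ) (w : (ℝ × ℝ) × ℝ → ℂ) (z : (ℝ × ℝ) × ℝ) : ℂ :=
  sp2 w z - Complex.I * ((B z).2 : ℂ) * w z

/-- Covariant gradient `∇_B w = ∇w − iBw` (spatial). -/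
def tcovGrad (B : (ℝ × ℝ) × ℝ → ℝ × ℝ) (w : (ℝ × ℝ) × ℝ → ℂ) (z : (ℝ × ℝ) × ℝ) : ℂ × ℂ :=
  (tcpd1 B w z, tcpd2 B w z)

/-- Covariant Laplacian `Δ_B w`. -/
def tcovLap (B : (ℝ × ℝ) × ℝ → ℝ × ℝ) (w : (ℝ × ℝ) × ℝ → ℂ) (z : (ℝ × ℝ) × ℝ) : ℂ :=
  tcpd1 B (tcpd1 B w) z + tcpd2 B (tcpd2 B w) z

/-- Covariant time derivative `∂_ξ w = ∂_t w + iξw`. -/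
def covt (ξ : (ℝ × ℝ) × ℝ → ℝ) (w : (ℝ × ℝ) × ℝ → ℂ) (z : (ℝ × ℝ) × ℝ) : ℂ :=
  tdt w z + Complex.I * (ξ z : ℂ) * w z

/-- Vorticity `μ(w,B) = curl((iw, ∇_B w) + B)`. -/
def tvort (w : (ℝ × ℝ) × ℝ → ℂ) (B : (ℝ × ℝ) × ℝ → ℝ × ℝ) (z : (ℝ × ℝ) × ℝ) : ℝ :=
  tcurl (fun y => ripv (Complex.I * w y) (tcovGrad B w y) + B y) z

/-- Velocity `V(w,B,ξ) = ∇(iw,∂_ξ w) − ∂_t(iw,∇_B w) − (∂_t B + ∇ξ)`. -/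
def tvel (w : (ℝ × ℝ) × ℝ → ℂ) (B : (ℝ × ℝ) × ℝ → ℝ × ℝ) (ξ : (ℝ × ℝ) × ℝ → ℝ)
    (z : (ℝ × ℝ) × ℝ) : ℝ × ℝ :=
  tgrad (fun y => rip (Complex.I * w y) (covt ξ w y)) z
    - tdt (fun y => ripv (Complex.I * w y) (tcovGrad B w y)) z
    - (tdt B z + tgrad ξ z)

/-- Time-dependent Ginzburg–Landau energy density. -/
def tglEnergy (ε : ℝ) (w : (ℝ × ℝ) × ℝ → ℂ) (B : (ℝ × ℝ) × ℝ → ℝ × ℝ)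
    (z : (ℝ × ℝ) × ℝ) : ℝ :=
  (1 / 2) * (Complex.normSq (tcpd1 B w z) + Complex.normSq (tcpd2 B w z)
    + (1 - Complex.normSq (w z)) ^ 2 / (2 * ε ^ 2) + (tcurl B z) ^ 2)

/-!
The identity splits into kinematics and dynamics. For arbitrary `(v, B)` of class `C²`, metric
compatibility of `∂_e^B` and the commutator `[∂_t, ∂_e^B] = -i ∂_t B_e` give
`∂_t g⁰_ε = div(∂_t v, ∇_B v) + curl(h' ∂_t B) - (∂_t v, F) - ∂_t B · J`, where
`F = Δ_B v + (v/ε²)(1 - |v|²)` and `J = ∇^⊥ h' + (iv, ∇_B v)` form the negative energy gradient.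
The equations of motion express `F` and `J` through `∂_t v`, `∂_t B` and `Z`: the terms `ifv`
cancel, and `∇f`, `h_ex ∇^⊥ h₀` enter only through `Z`.
-/

section DirectionalDerivatives

variable {𝕜 E F : Type*} [NontriviallyNormedField 𝕜] [NormedAddCommGroup E] [NormedSpace 𝕜 E]
  [NormedAddCommGroup F] [NormedSpace 𝕜 F] {z : E}

theorem differentiableAt_fderiv_apply {g : E → F} (hg : ContDiffAt 𝕜 2 g z) (e : E) :
    DifferentiableAt 𝕜 (fun y => fderiv 𝕜 g y e) z :=
  ((hg.fderiv_right (m := 1) (by norm_num)).differentiableAt one_ne_zero).clm_apply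
    (differentiableAt_const e)

theorem fderiv_fderiv_apply_comm [IsRCLikeNormedField 𝕜] {g : E → F} (hg : ContDiffAt 𝕜 2 g z)
    (d e : E) :
    fderiv 𝕜 (fun y => fderiv 𝕜 g y e) z d = fderiv 𝕜 (fun y => fderiv 𝕜 g y d) z e := by
  have hg' : DifferentiableAt 𝕜 (fderiv 𝕜 g) z :=
    (hg.fderiv_right (m := 1) (by norm_num)).differentiableAt one_ne_zero
  have second_apply (c : E) :
      fderiv 𝕜 (fun y => fderiv 𝕜 g y c) z = (fderiv 𝕜 (fderiv 𝕜 g) z).flip c := by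
    simpa using fderiv_clm_apply hg' (differentiableAt_const c)
  have symm : IsSymmSndFDerivAt 𝕜 g z := hg.isSymmSndFDerivAt (by simp)
  simpa only [second_apply, ContinuousLinearMap.flip_apply] using symm.eq d e

end DirectionalDerivatives

section RealInnerProduct

variable {E : Type*} [NormedAddCommGroup E] [NormedSpace ℝ E] {z : E}

theorem rip_eq_inner (a b : ℂ) : rip a b = inner ℝ a b := by
  rw [Complex.inner, rip, Complex.mul_re, Complex.conj_re, Complex.conj_im]
  ring

theorem rip_I_mul_cdotR (a : ℂ) (X : ℂ × ℂ) (Z : ℝ × ℝ) :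
    rip a (Complex.I * cdotR X Z) = rdot (ripv a (Complex.I * X.1, Complex.I * X.2)) Z := by
  simp only [rip, rdot, ripv, cdotR, mul_re, mul_im, add_re, add_im, I_re, I_im, ofReal_re,
    ofReal_im]
  ring

theorem differentiableAt_rip {a b : E → ℂ} (ha : DifferentiableAt ℝ a z)
    (hb : DifferentiableAt ℝ b z) : DifferentiableAt ℝ (fun y => rip (a y) (b y)) z := by
  simpa only [rip_eq_inner] using ha.inner ℝ hb

theorem fderiv_rip_apply {a b : E → ℂ} (ha : DifferentiableAt ℝ a z)
    (hb : DifferentiableAt ℝ b z) (d : E) :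
    fderiv ℝ (fun y => rip (a y) (b y)) z d
      = rip (fderiv ℝ a z d) (b z) + rip (a z) (fderiv ℝ b z d) := by
  simp only [rip_eq_inner, fderiv_inner_apply ℝ ha hb, add_comm]

theorem hasFDerivAt_normSq {a : E → ℂ} (ha : DifferentiableAt ℝ a z) :
    HasFDerivAt (fun y => normSq (a y)) (2 • (innerSL ℝ (a z)).comp (fderiv ℝ a z)) z := by
  simpa only [normSq_eq_norm_sq] using ha.hasFDerivAt.norm_sq

end RealInnerProduct

section CovariantDerivative

variable {E : Type*} [NormedAddCommGroup E] [NormedSpace ℝ E] {z : E}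

/-- The covariant derivative `∂_e w - i b w` in the direction `e`, where `b` is the component of the
connection along `e`. It treats `tcpd1 B` and `tcpd2 B` uniformly: they are the cases
`b = B₁`, `e = e₁` and `b = B₂`, `e = e₂`. -/
def covDeriv (b : E → ℝ) (e : E) (w : E → ℂ) (z : E) : ℂ :=
  fderiv ℝ w z e - Complex.I * (b z : ℂ) * w z

theorem differentiableAt_covDeriv {b : E → ℝ} {w : E → ℂ} (hb : DifferentiableAt ℝ b z)
    (hw : ContDiffAt ℝ 2 w z) (e : E) : DifferentiableAt ℝ (covDeriv b e w) z :=
  (differentiableAt_fderiv_apply hw e).sub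
    (((Complex.ofRealCLM.differentiableAt.comp z hb).const_mul Complex.I).mul
      (hw.differentiableAt two_ne_zero))

theorem fderiv_covDeriv_eq_covDeriv_fderiv_sub {b : E → ℝ} {w : E → ℂ} (hb : DifferentiableAt ℝ b z)
    (hw : ContDiffAt ℝ 2 w z) (d e : E) :
    fderiv ℝ (covDeriv b e w) z d
      = covDeriv b e (fun y => fderiv ℝ w y d) z - Complex.I * (fderiv ℝ b z d : ℂ) * w z := by
  have hb' : HasFDerivAt (fun y => (b y : ℂ)) (Complex.ofRealCLM.comp (fderiv ℝ b z)) z :=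
    Complex.ofRealCLM.hasFDerivAt.comp z hb.hasFDerivAt
  have hD : HasFDerivAt (covDeriv b e w) _ z :=
    (differentiableAt_fderiv_apply hw e).hasFDerivAt.sub
      ((hb'.const_mul Complex.I).mul (hw.differentiableAt two_ne_zero).hasFDerivAt)
  rw [hD.fderiv, covDeriv, ← fderiv_fderiv_apply_comm hw d e]
  simp only [sub_apply, add_apply, smul_apply, smul_eq_mul, ContinuousLinearMap.comp_apply,
    ofRealCLM_apply]
  ring

/-- The connection terms cancel because multiplication by `i b` is skew for `rip`. -/
theorem fderiv_rip_apply_eq_covDeriv {a c : E → ℂ} (ha : DifferentiableAt ℝ a z)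
    (hc : DifferentiableAt ℝ c z) (b : E → ℝ) (e : E) :
    fderiv ℝ (fun y => rip (a y) (c y)) z e
      = rip (covDeriv b e a z) (c z) + rip (a z) (covDeriv b e c z) := by
  rw [fderiv_rip_apply ha hc]
  simp only [rip, covDeriv, sub_re, sub_im, mul_re, mul_im, I_re, I_im, ofReal_re, ofReal_im]
  ring

theorem rip_covDeriv_fderiv_covDeriv {b : E → ℝ} {w : E → ℂ} (hb : DifferentiableAt ℝ b z)
    (hw : ContDiffAt ℝ 2 w z) (d e : E) :
    rip (covDeriv b e w z) (fderiv ℝ (covDeriv b e w) z d)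
      = fderiv ℝ (fun y => rip (fderiv ℝ w y d) (covDeriv b e w y)) z e
        - rip (fderiv ℝ w z d) (covDeriv b e (covDeriv b e w) z)
        - fderiv ℝ b z d * rip (Complex.I * w z) (covDeriv b e w z) := by
  rw [fderiv_rip_apply_eq_covDeriv (differentiableAt_fderiv_apply hw d)
    (differentiableAt_covDeriv hb hw e) b e, fderiv_covDeriv_eq_covDeriv_fderiv_sub hb hw]
  simp only [rip, sub_re, sub_im, mul_re, mul_im, I_re, I_im, ofReal_re, ofReal_im]
  ring

end CovariantDerivative

section SpaceTime

variable {z : (ℝ × ℝ) × ℝ} {v : (ℝ × ℝ) × ℝ → ℂ} {B : (ℝ × ℝ) × ℝ → ℝ × ℝ}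

theorem tdiv_prodMk {g k : (ℝ × ℝ) × ℝ → ℝ} (hg : DifferentiableAt ℝ g z)
    (hk : DifferentiableAt ℝ k z) : tdiv (fun y => (g y, k y)) z = sp1 g z + sp2 k z := by
  simp only [tdiv, sp1, sp2, hg.fderiv_prodMk hk, ContinuousLinearMap.prod_apply]

theorem tcurl_smul {g : (ℝ × ℝ) × ℝ → ℝ} {X : (ℝ × ℝ) × ℝ → ℝ × ℝ}
    (hg : DifferentiableAt ℝ g z) (hX : DifferentiableAt ℝ X z) :
    tcurl (fun y => g y • X y) z = g z * tcurl X z + rdot (X z) (tgradPerp g z) := by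
  simp only [tcurl, tgradPerp, rdot, sp1, sp2, fderiv_fun_smul hg hX, add_apply, smul_apply,
    ContinuousLinearMap.smulRight_apply, Prod.fst_add, Prod.snd_add, Prod.smul_fst, Prod.smul_snd,
    smul_eq_mul]
  ring

theorem differentiableAt_tcurl (hB : ContDiffAt ℝ 2 B z) : DifferentiableAt ℝ (tcurl B) z :=
  (differentiableAt_fderiv_apply hB ((1, 0), 0)).snd.sub
    (differentiableAt_fderiv_apply hB ((0, 1), 0)).fst

theorem tdt_tcurl (hB : ContDiffAt ℝ 2 B z) : tdt (tcurl B) z = tcurl (tdt B) z := by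
  have h₁ : DifferentiableAt ℝ (sp1 B) z := differentiableAt_fderiv_apply hB ((1, 0), 0)
  have h₂ : DifferentiableAt ℝ (sp2 B) z := differentiableAt_fderiv_apply hB ((0, 1), 0)
  have comm₁ : tdt (sp1 B) z = sp1 (tdt B) z := fderiv_fderiv_apply_comm hB _ _
  have comm₂ : tdt (sp2 B) z = sp2 (tdt B) z := fderiv_fderiv_apply_comm hB _ _
  have hcurl : HasFDerivAt (tcurl B) _ z := h₁.hasFDerivAt.snd.sub h₂.hasFDerivAt.fst
  rw [tdt, hcurl.fderiv, tcurl, ← comm₁, ← comm₂]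
  rfl

theorem tdt_tglEnergy_eq_rip (hv : ContDiffAt ℝ 2 v z) (hB : ContDiffAt ℝ 2 B z) (ε : ℝ) :
    tdt (tglEnergy ε v B) z
      = rip (tcpd1 B v z) (tdt (tcpd1 B v) z) + rip (tcpd2 B v z) (tdt (tcpd2 B v) z)
        - (1 - normSq (v z)) / ε ^ 2 * rip (v z) (tdt v z) + tcurl B z * tdt (tcurl B) z := by
  have hB' := hB.differentiableAt two_ne_zero
  have hD₁ : DifferentiableAt ℝ (tcpd1 B v) z := differentiableAt_covDeriv hB'.fst hv _
  have hD₂ : DifferentiableAt ℝ (tcpd2 B v) z := differentiableAt_covDeriv hB'.snd hv _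
  have hpot := ((hasFDerivAt_normSq (hv.differentiableAt two_ne_zero)).const_sub 1).pow 2
  have henergy : HasFDerivAt (tglEnergy ε v B) _ z :=
    (((hasFDerivAt_normSq hD₁).add (hasFDerivAt_normSq hD₂)).add
      (hpot.mul_const (2 * ε ^ 2)⁻¹)).add
      ((differentiableAt_tcurl hB).hasFDerivAt.pow 2) |>.const_mul (1 / 2)
  rw [tdt, henergy.fderiv]
  simp only [rip_eq_inner, tdt, add_apply, smul_apply, neg_apply, ContinuousLinearMap.comp_apply,
    coe_innerSL_apply, smul_eq_mul, nsmul_eq_mul, Nat.cast_ofNat, Nat.add_one_sub_one, pow_one]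
  ring

theorem rip_tcpd1_tdt_tcpd1 (hv : ContDiffAt ℝ 2 v z) (hB : DifferentiableAt ℝ B z) :
    rip (tcpd1 B v z) (tdt (tcpd1 B v) z)
      = sp1 (fun y => rip (tdt v y) (tcpd1 B v y)) z - rip (tdt v z) (tcpd1 B (tcpd1 B v) z)
        - (tdt B z).1 * rip (Complex.I * v z) (tcpd1 B v z) := by
  have h := rip_covDeriv_fderiv_covDeriv hB.fst hv ((0, 0), 1) ((1, 0), 0)
  rwa [fderiv.fst hB] at h

theorem rip_tcpd2_tdt_tcpd2 (hv : ContDiffAt ℝ 2 v z) (hB : DifferentiableAt ℝ B z) :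
    rip (tcpd2 B v z) (tdt (tcpd2 B v) z)
      = sp2 (fun y => rip (tdt v y) (tcpd2 B v y)) z - rip (tdt v z) (tcpd2 B (tcpd2 B v) z)
        - (tdt B z).2 * rip (Complex.I * v z) (tcpd2 B v z) := by
  have h := rip_covDeriv_fderiv_covDeriv hB.snd hv ((0, 0), 1) ((0, 1), 0)
  rwa [fderiv.snd hB] at h

theorem tdt_tglEnergy (hv : ContDiffAt ℝ 2 v z) (hB : ContDiffAt ℝ 2 B z) (ε : ℝ) :
    tdt (tglEnergy ε v B) z
      = tdiv (fun y => ripv (tdt v y) (tcovGrad B v y)) z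
        + tcurl (fun y => tcurl B y • tdt B y) z
        - rip (tdt v z) (tcovLap B v z + v z / (ε ^ 2 : ℂ) * (1 - (normSq (v z) : ℂ)))
        - rdot (tdt B z) (tgradPerp (tcurl B) z + ripv (Complex.I * v z) (tcovGrad B v z)) := by
  have hB' := hB.differentiableAt two_ne_zero
  have hvt : DifferentiableAt ℝ (tdt v) z := differentiableAt_fderiv_apply hv _
  have hD₁ : DifferentiableAt ℝ (tcpd1 B v) z := differentiableAt_covDeriv hB'.fst hv _
  have hD₂ : DifferentiableAt ℝ (tcpd2 B v) z := differentiableAt_covDeriv hB'.snd hv _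
  have hdiv : tdiv (fun y => ripv (tdt v y) (tcovGrad B v y)) z
      = sp1 (fun y => rip (tdt v y) (tcpd1 B v y)) z
        + sp2 (fun y => rip (tdt v y) (tcpd2 B v y)) z :=
    tdiv_prodMk (differentiableAt_rip hvt hD₁) (differentiableAt_rip hvt hD₂)
  have hcurl : tcurl (fun y => tcurl B y • tdt B y) z
      = tcurl B z * tcurl (tdt B) z + rdot (tdt B z) (tgradPerp (tcurl B) z) :=
    tcurl_smul (differentiableAt_tcurl hB) (differentiableAt_fderiv_apply hB _)
  have hpot : v z / (ε ^ 2 : ℂ) * (1 - (normSq (v z) : ℂ))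
      = ((1 - normSq (v z)) / ε ^ 2) • v z := by
    rw [real_smul]
    push_cast
    ring
  rw [tdt_tglEnergy_eq_rip hv hB, rip_tcpd1_tdt_tcpd1 hv hB', rip_tcpd2_tdt_tcpd2 hv hB',
    tdt_tcurl hB, hdiv, hcurl, hpot, tcovLap]
  simp only [rip_eq_inner, inner_add_right, real_inner_smul_right, real_inner_comm (v z), rdot,
    ripv, tcovGrad, Prod.fst_add, Prod.snd_add]
  ring

theorem energy_density_evolution_gauge_fixed_general {ε : ℝ} (_hε : ε ≠ 0) {Z : ℝ × ℝ}
    (hv : ContDiffAt ℝ 2 v z) (hB : ContDiffAt ℝ 2 B z)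
    (heq1 : tdt v z = tcovLap B v z + v z / (ε ^ 2 : ℂ) * (1 - (normSq (v z) : ℂ))
      + 2 * Complex.I * cdotR (tcovGrad B v z) Z - v z * ((rdot Z Z : ℝ) : ℂ))
    (heq2 : tdt B z = tgradPerp (tcurl B) z + ripv (Complex.I * v z) (tcovGrad B v z)
      + (normSq (v z) - 1) • Z) :
    tdt (tglEnergy ε v B) z
      = tdiv (fun y => ripv (tdt v y) (tcovGrad B v y)) z
        + tcurl (fun y => tcurl B y • tdt B y) z
        - normSq (tdt v z) - rdot (tdt B z) (tdt B z)
        + (normSq (v z) - 1) * rdot Z (tdt B z)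
        + 2 * rdot (ripv (tdt v z) (Complex.I * tcpd1 B v z, Complex.I * tcpd2 B v z)) Z
        - rip (v z) (tdt v z) * rdot Z Z := by
  have hforce : tcovLap B v z + v z / (ε ^ 2 : ℂ) * (1 - (normSq (v z) : ℂ))
      = tdt v z - (2 : ℝ) • (Complex.I * cdotR (tcovGrad B v z) Z) + rdot Z Z • v z := by
    simp only [real_smul, ofReal_ofNat]
    linear_combination -heq1
  have hcurrent : tgradPerp (tcurl B) z + ripv (Complex.I * v z) (tcovGrad B v z)
      = tdt B z - (normSq (v z) - 1) • Z := by
    rw [heq2, add_sub_cancel_right]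
  have hwork : rip (tdt v z) (Complex.I * cdotR (tcovGrad B v z) Z)
      = rdot (ripv (tdt v z) (Complex.I * tcpd1 B v z, Complex.I * tcpd2 B v z)) Z :=
    rip_I_mul_cdotR ..
  rw [tdt_tglEnergy hv hB, hforce, hcurrent, ← hwork]
  simp only [rip_eq_inner, inner_add_right, inner_sub_right, real_inner_smul_right,
    real_inner_self_eq_norm_sq, normSq_eq_norm_sq, rdot, Prod.fst_sub, Prod.snd_sub,
    Prod.smul_fst, Prod.smul_snd, smul_eq_mul, real_inner_comm (v z)]
  ring

end SpaceTime

/-- evolution of the Ginzburg–Landau energy density for solutions of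
the modified equations in the Φ = f gauge. -/
theorem energy_density_evolution_gauge_fixed
(Ω : Set (ℝ × ℝ)) (hΩ : IsOpen Ω) (ε : ℝ) (hε : 0 < ε) (h_ex : ℝ)
    (f h₀ : ℝ × ℝ → ℝ)
    (hf : ContDiffOn ℝ (⊤ : ℕ∞) f Ω) (hh₀ : ContDiffOn ℝ (⊤ : ℕ∞) h₀ Ω)
    (hΔf : ∀ x ∈ Ω, slap f x = f x) (hΔh₀ : ∀ x ∈ Ω, slap h₀ x = h₀ x)
    (Z : ℝ × ℝ → ℝ × ℝ) (hZ : Z = fun x => sgrad f x - h_ex • sgradPerp h₀ x)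
    (v : (ℝ × ℝ) × ℝ → ℂ) (B : (ℝ × ℝ) × ℝ → ℝ × ℝ)
    (hv : ContDiffOn ℝ (⊤ : ℕ∞) v (Ω ×ˢ (Set.univ : Set ℝ)))
    (hB : ContDiffOn ℝ (⊤ : ℕ∞) B (Ω ×ˢ (Set.univ : Set ℝ)))
    (heq1 : ∀ x ∈ Ω, ∀ t : ℝ,
      tdt v (x, t) + Complex.I * (f x : ℂ) * v (x, t)
        = tcovLap B v (x, t)
          + v (x, t) / (ε ^ 2 : ℂ) * (1 - (Complex.normSq (v (x, t)) : ℂ))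
          + 2 * Complex.I * cdotR (tcovGrad B v (x, t)) (Z x)
          + Complex.I * v (x, t) * (f x : ℂ)
          - v (x, t) * ((rdot (Z x) (Z x) : ℝ) : ℂ))
    (heq2 : ∀ x ∈ Ω, ∀ t : ℝ,
      tdt B (x, t) + sgrad f x
        = tgradPerp (tcurl B) (x, t)
          + ripv (Complex.I * v (x, t)) (tcovGrad B v (x, t))
          + (Complex.normSq (v (x, t))) • sgrad f x
          - ((Complex.normSq (v (x, t)) - 1) * h_ex) • sgradPerp h₀ x) :
    ∀ x ∈ Ω, ∀ t : ℝ,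
      tdt (tglEnergy ε v B) (x, t)
        = tdiv (fun y => ripv (tdt v y) (tcovGrad B v y)) (x, t)
          + tcurl (fun y => (tcurl B y) • tdt B y) (x, t)
          - Complex.normSq (tdt v (x, t))
          - rdot (tdt B (x, t)) (tdt B (x, t))
          + (Complex.normSq (v (x, t)) - 1) * rdot (Z x) (tdt B (x, t))
          + 2 * rdot (ripv (tdt v (x, t))
              (Complex.I * tcpd1 B v (x, t), Complex.I * tcpd2 B v (x, t))) (Z x)
          - rip (v (x, t)) (tdt v (x, t)) * rdot (Z x) (Z x) := by
  intro x hx t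
  have hΩt : Ω ×ˢ Set.univ ∈ nhds (x, t) := (hΩ.prod isOpen_univ).mem_nhds ⟨hx, Set.mem_univ t⟩
  refine energy_density_evolution_gauge_fixed_general hε.ne'
    ((hv.contDiffAt hΩt).of_le (by norm_cast)) ((hB.contDiffAt hΩt).of_le (by norm_cast)) ?_ ?_
  · linear_combination heq1 x hx t
  · rw [hZ]
    linear_combination (norm := module) heq2 x hx t

end
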